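/- Fix α ∈ (0,∞) and a finite constant Δ > 0; suppose P is convex, θ : P → ℝ is linear with −∞ < M_− < M_+ < ∞ (M_− = inf_P θ(P), M_+ = sup_P θ(P)), and suppose there exists a bounded measurable ℓ* : X → ℝ with ‖ℓ*‖∞ ≤ 1 and inf{ ∫ ℓ* dP0 − ∫ ℓ* dP1 : P0, P1 ∈ P, θ(P0) − θ(P1) ≥ Δ } > 0. Let Q1 = Q1^{(α,ℓ*)} be the binary channel with Z = {−z0, z0} and Q the corresponding non-interactive channel from X^n to Z^n. Then there exist a measurable estimator θ̂ : Z^n → ℝ satisfying the binary-search tail bound sup_{P∈P} Q P^⊗n( |θ̂ − θ(P)| > (l+1)Δ ) ≤ 4·∑_{k=l+1}^{N−2} max( η_A^{(n)}(Q, kΔ), 0 ) for every l ∈ ℕ0 (N the smallest integer with NΔ > M_+ − M_−) and an affine function g : ℝ → ℝ such that | Π_{[M_−,M_+]}( g(z̄_n) ) − θ̂(z) | ≤ 2Δ for all z ∈ Z^n, where z̄_n = (1/n)∑_{i=1}^n z_i and Π_{[M_−,M_+]} is the projection of ℝ onto [M_−, M_+]. -/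

import Mathlib

open MeasureTheory ProbabilityTheory ENNReal

namespace PrivacyPaper

variable {X Z Ω : Type*} [MeasurableSpace X] [MeasurableSpace Z] [MeasurableSpace Ω]

/-- Total variation distance between two measures:
`d_TV(P0, P1) = sup_{A measurable} |P0(A) - P1(A)|`. -/
noncomputable def dTV (P0 P1 : Measure Ω) : ℝ :=
  ⨆ A : {A : Set Ω // MeasurableSet A}, |(P0 A.1).toReal - (P1 A.1).toReal|

/-- Hellinger distance between two measures, computed via densities with respect to the
dominating measure `P0 + P1`. -/
noncomputable def dH (P0 P1 : Measure Ω) : ℝ :=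
  Real.sqrt (∫ ω, (Real.sqrt ((P0.rnDeriv (P0 + P1) ω).toReal) -
    Real.sqrt ((P1.rnDeriv (P0 + P1) ω).toReal)) ^ 2 ∂(P0 + P1))

/-- Hellinger affinity `ρ(P0, P1) = ∫ √(p0 p1) dμ`, with `μ = P0 + P1`. -/
noncomputable def hellingerAffinity (P0 P1 : Measure Ω) : ℝ :=
  ∫ ω, Real.sqrt ((P0.rnDeriv (P0 + P1) ω).toReal * (P1.rnDeriv (P0 + P1) ω).toReal)
    ∂(P0 + P1)

/-- Modulus of continuity of a functional `θ` over `P` with respect to a distance `d`,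
with values in `ℝ≥0∞`. -/
noncomputable def modulus (d : Measure X → Measure X → ℝ) (P : Set (Measure X))
    (θ : Measure X → ℝ) (ε : ℝ) : ℝ≥0∞ :=
  ⨆ (P0 : Measure X) (_ : P0 ∈ P) (P1 : Measure X) (_ : P1 ∈ P) (_ : d P0 P1 ≤ ε),
    ENNReal.ofReal |θ P0 - θ P1|

/-- Total variation modulus of continuity `ω_TV`. -/
noncomputable def omegaTV (P : Set (Measure X)) (θ : Measure X → ℝ) : ℝ → ℝ≥0∞ :=
  modulus dTV P θ

/-- Hellinger modulus of continuity `ω_H`. -/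
noncomputable def omegaH (P : Set (Measure X)) (θ : Measure X → ℝ) : ℝ → ℝ≥0∞ :=
  modulus dH P θ

/-- Push-forward of a measure through a channel `c` (given as a map into measures):
`(c P)(A) = ∫ c(A|x) dP(x)`. -/
noncomputable def push (c : X → Measure Z) (μ : Measure X) : Measure Z := μ.bind c

/-- Privatized Hellinger modulus `ω_H^{(Q1)}`. -/
noncomputable def omegaHQ (c : X → Measure Z) (P : Set (Measure X)) (θ : Measure X → ℝ) :
    ℝ → ℝ≥0∞ :=
  modulus (fun P0 P1 => dH (push c P0) (push c P1)) P θ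

/-- Left limit at `m ∈ ℝ≥0∞` of a nondecreasing `ℝ≥0∞`-valued function on `[0,∞)`:
`f(m⁻) = sup_{0 ≤ y < m} f(y)`. -/
noncomputable def leftLimE (f : ℝ → ℝ≥0∞) (m : ℝ≥0∞) : ℝ≥0∞ :=
  ⨆ (y : ℝ) (_ : 0 ≤ y) (_ : ENNReal.ofReal y < m), f y

/-- Right limit at `x ∈ ℝ` of a nondecreasing `ℝ≥0∞`-valued function:
`f(x⁺) = inf_{y > x} f(y)`. -/
noncomputable def rightLimE (f : ℝ → ℝ≥0∞) (x : ℝ) : ℝ≥0∞ :=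
  ⨅ (y : ℝ) (_ : x < y), f y

/-- Left limit of a nondecreasing loss function at `m ∈ ℝ≥0∞`, with the convention
`l(0⁻) = l(0)`, as an element of `ℝ≥0∞`. -/
noncomputable def lossLeftLim (l : ℝ → ℝ) (m : ℝ≥0∞) : ℝ≥0∞ :=
  if m = 0 then ENNReal.ofReal (l 0)
  else ⨆ (y : ℝ) (_ : 0 ≤ y) (_ : ENNReal.ofReal y < m), ENNReal.ofReal (l y)

/-- A (randomized) test is a measurable function with values in `[0,1]`. -/
def IsTest (φ : Ω → ℝ) : Prop := Measurable φ ∧ ∀ ω, 0 ≤ φ ω ∧ φ ω ≤ 1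

/-- Risk of a test: `∫ φ dμ0 + ∫ (1 - φ) dμ1`. -/
noncomputable def testRisk (μ0 μ1 : Measure Ω) (φ : Ω → ℝ) : ℝ :=
  (∫ ω, φ ω ∂μ0) + ∫ ω, (1 - φ ω) ∂μ1

/-- Testing affinity of a pair of measures: `π(μ0, μ1) = inf_φ (∫ φ dμ0 + ∫ (1-φ) dμ1)`. -/
noncomputable def pairAffinity (μ0 μ1 : Measure Ω) : ℝ :=
  sInf {r : ℝ | ∃ φ : Ω → ℝ, IsTest φ ∧ r = testRisk μ0 μ1 φ}

/-- Testing affinity of two sets of measures: `π(M0, M1) = sup π(μ0, μ1)`. -/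
noncomputable def setAffinity (M0 M1 : Set (Measure Ω)) : ℝ :=
  sSup {r : ℝ | ∃ μ0 ∈ M0, ∃ μ1 ∈ M1, r = pairAffinity μ0 μ1}

/-- The set of finite convex combinations of elements of `M`. -/
def convComb (M : Set (Measure Ω)) : Set (Measure Ω) :=
  {μ | ∃ (m : ℕ) (w : Fin m → ℝ≥0∞) (ν : Fin m → Measure Ω),
    (∑ i, w i) = 1 ∧ (∀ i, ν i ∈ M) ∧ μ = ∑ i, w i • ν i}

/-- The upper affinity `η_A^{(n)}(Q, Δ)`, for the channel described through the map
`QPn : P ↦ Q P^{⊗n}`. -/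
noncomputable def etaA {Zn : Type*} [MeasurableSpace Zn] (QPn : Measure X → Measure Zn)
    (P : Set (Measure X)) (θ : Measure X → ℝ) (Δ : ℝ) : ℝ :=
  ⨆ t : ℝ, setAffinity (convComb (QPn '' {μ | μ ∈ P ∧ θ μ ≤ t}))
    (convComb (QPn '' {μ | μ ∈ P ∧ t + Δ ≤ θ μ}))

/-- The affinity `η_2^{(n)}(Q, Δ)` (no convex hulls). -/
noncomputable def eta2 {Zn : Type*} [MeasurableSpace Zn] (QPn : Measure X → Measure Zn)
    (P : Set (Measure X)) (θ : Measure X → ℝ) (Δ : ℝ) : ℝ :=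
  ⨆ t : ℝ, setAffinity (QPn '' {μ | μ ∈ P ∧ θ μ ≤ t}) (QPn '' {μ | μ ∈ P ∧ t + Δ ≤ θ μ})

/-- `Δ_A^{(n)}(Q, η) = sup {Δ ≥ 0 : η_A^{(n)}(Q, Δ) > η}`, as an element of `ℝ≥0∞`. -/
noncomputable def DeltaA {Zn : Type*} [MeasurableSpace Zn] (QPn : Measure X → Measure Zn)
    (P : Set (Measure X)) (θ : Measure X → ℝ) (η : ℝ) : ℝ≥0∞ :=
  ⨆ (Δ : ℝ) (_ : 0 ≤ Δ) (_ : η < etaA QPn P θ Δ), ENNReal.ofReal Δ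

/-- `Δ_2^{(n)}(Q, η) = sup {Δ ≥ 0 : η_2^{(n)}(Q, Δ) > η}`, as an element of `ℝ≥0∞`. -/
noncomputable def Delta2 {Zn : Type*} [MeasurableSpace Zn] (QPn : Measure X → Measure Zn)
    (P : Set (Measure X)) (θ : Measure X → ℝ) (η : ℝ) : ℝ≥0∞ :=
  ⨆ (Δ : ℝ) (_ : 0 ≤ Δ) (_ : η < eta2 QPn P θ Δ), ENNReal.ofReal Δ

/-- The privatized distribution `Q P^{⊗n}` of the observation vector. -/
noncomputable def privProd {Zn : Type*} [MeasurableSpace Zn] (n : ℕ)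
    (Q : (Fin n → X) → Measure Zn) (μ : Measure X) : Measure Zn :=
  (Measure.pi fun _ : Fin n => μ).bind Q

/-- The `Q`-privatized minimax risk `M_n(Q, P, θ)` (with values in `ℝ≥0∞`), where the channel
is described through the map `QPn : P ↦ Q P^{⊗n}`. -/
noncomputable def minimaxRisk {Zn : Type*} [MeasurableSpace Zn] (l : ℝ → ℝ)
    (QPn : Measure X → Measure Zn) (P : Set (Measure X)) (θ : Measure X → ℝ) : ℝ≥0∞ :=
  ⨅ (est : Zn → ℝ) (_ : Measurable est), ⨆ (μ : Measure X) (_ : μ ∈ P),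
    ∫⁻ z, ENNReal.ofReal (l |est z - θ μ|) ∂(QPn μ)

/-- Iterated sequential integral: `seqIntegral K n x g` is
`∫ ⋯ ∫ g(z_1,…,z_n) K_{n-1}(dz_n | x_n, z_{1:n-1}) ⋯ K_0(dz_1 | x_1)`. -/
noncomputable def seqIntegral (K : (i : ℕ) → X × (Fin i → Z) → Measure Z) :
    (n : ℕ) → (Fin n → X) → ((Fin n → Z) → ℝ≥0∞) → ℝ≥0∞
  | 0, _, g => g fun i => i.elim0
  | n + 1, x, g => seqIntegral K n (fun i => x i.castSucc)
      fun zpre => ∫⁻ zn, g (Fin.snoc zpre zn) ∂(K n (x (Fin.last n), zpre))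

/-- An `α`-sequentially interactive channel: `Q` is obtained by sequential composition of
Markov kernels `K i : X × Z^i → Z`, each of which satisfies the `α`-differential privacy
ratio bound in its `X`-argument. -/
def IsSeqInteractive (n : ℕ) (α : ℝ) (Q : Kernel (Fin n → X) (Fin n → Z)) : Prop :=
  ∃ K : (i : ℕ) → Kernel (X × (Fin i → Z)) Z,
    (∀ i, IsMarkovKernel (K i)) ∧
    (∀ (i : ℕ) (x x' : X) (zpre : Fin i → Z) (A : Set Z), MeasurableSet A →
      K i (x, zpre) A ≤ ENNReal.ofReal (Real.exp α) * K i (x', zpre) A) ∧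
    (∀ (x : Fin n → X) (A : Set (Fin n → Z)), MeasurableSet A →
      Q x A = seqIntegral (fun i p => K i p) n x (A.indicator fun _ => 1))

/-- The `α`-private minimax risk `M_{n,α}(P, θ)`: infimum over all output dimensions
`q ∈ ℕ` and all `α`-sequentially interactive channels from `X^n` to `(ℝ^q)^n`. -/
noncomputable def privMinimaxRisk (n : ℕ) (α : ℝ) (l : ℝ → ℝ) (P : Set (Measure X))
    (θ : Measure X → ℝ) : ℝ≥0∞ :=
  ⨅ (q : ℕ) (Q : Kernel (Fin n → X) (Fin n → (Fin q → ℝ))) (_ : IsMarkovKernel Q)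
    (_ : IsSeqInteractive n α Q),
      minimaxRisk l (privProd n fun x => Q x) P θ

/-- The mixture `λ P0 + (1-λ) P1` of two measures. -/
noncomputable def mix (lam : ℝ) (P0 P1 : Measure Ω) : Measure Ω :=
  ENNReal.ofReal lam • P0 + ENNReal.ofReal (1 - lam) • P1

/-- Convexity of a set of measures. -/
def ConvexMeasureSet (P : Set (Measure Ω)) : Prop :=
  ∀ P0 ∈ P, ∀ P1 ∈ P, ∀ lam : ℝ, 0 ≤ lam → lam ≤ 1 → mix lam P0 P1 ∈ P

/-- Linearity of a functional on a (convex) set of measures. -/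
def LinearFunctional (P : Set (Measure X)) (θ : Measure X → ℝ) : Prop :=
  ∀ P0 ∈ P, ∀ P1 ∈ P, ∀ lam : ℝ, 0 ≤ lam → lam ≤ 1 →
    θ (mix lam P0 P1) = lam * θ P0 + (1 - lam) * θ P1

/-- A family of measures is dominated if all its members are absolutely continuous with
respect to a single σ-finite measure. -/
def Dominated (M : Set (Measure Ω)) : Prop :=
  ∃ ν : Measure Ω, SigmaFinite ν ∧ ∀ μ ∈ M, μ ≪ ν

/-- Condition (A): the functional `θ` is bounded on `P`. -/
def CondA (P : Set (Measure X)) (θ : Measure X → ℝ) : Prop := ∃ c : ℝ, ∀ μ ∈ P, |θ μ| ≤ c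

/-- Condition (B): the loss `l : [0,∞) → [0,∞)` is nondecreasing, `l 0 = 0` and
`l(3t/2) ≤ a l(t)` for all `t ≥ 0`. -/
def CondB (l : ℝ → ℝ) (a : ℝ) : Prop :=
  (∀ u v : ℝ, 0 ≤ u → u ≤ v → l u ≤ l v) ∧ (∀ u : ℝ, 0 ≤ u → 0 ≤ l u) ∧ l 0 = 0 ∧
    ∀ u : ℝ, 0 ≤ u → l (3 / 2 * u) ≤ a * l u

/-- Sup-norm of a (bounded) function. -/
noncomputable def supNorm (f : X → ℝ) : ℝ := ⨆ x, |f x|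

/-- The binary privatization channel `Q_1^{(α,ℓ)}`, supported on `{-z0, z0}` with
`z0 = ‖ℓ‖_∞ (e^α + 1)/(e^α - 1)`, giving the point `z0` probability `(1 + ℓ(x)/z0)/2`. -/
noncomputable def binChannel (α : ℝ) (ℓ : X → ℝ) (x : X) : Measure ℝ :=
  ENNReal.ofReal ((1 + ℓ x / (supNorm ℓ * ((Real.exp α + 1) / (Real.exp α - 1)))) / 2) •
      Measure.dirac (supNorm ℓ * ((Real.exp α + 1) / (Real.exp α - 1))) +
    ENNReal.ofReal ((1 - ℓ x / (supNorm ℓ * ((Real.exp α + 1) / (Real.exp α - 1)))) / 2) •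
      Measure.dirac (-(supNorm ℓ * ((Real.exp α + 1) / (Real.exp α - 1))))

/-- `g_d(Q, η) = inf { d(P0, P1) : π(Q P0^{⊗n}, Q P1^{⊗n}) ≤ η }`, as an element of `ℝ≥0∞`
(with `inf ∅ = ∞`). -/
noncomputable def gDist {Zn : Type*} [MeasurableSpace Zn] (d : Measure X → Measure X → ℝ)
    (QPn : Measure X → Measure Zn) (P : Set (Measure X)) (η : ℝ) : ℝ≥0∞ :=
  ⨅ (P0 : Measure X) (_ : P0 ∈ P) (P1 : Measure X) (_ : P1 ∈ P)
    (_ : pairAffinity (QPn P0) (QPn P1) ≤ η), ENNReal.ofReal (d P0 P1)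

/-- Integral of a bounded measurable function against a finite signed measure, via the
Jordan decomposition. -/
noncomputable def sInt (φ : Ω → ℝ) (σ : MeasureTheory.SignedMeasure Ω) : ℝ :=
  (∫ ω, φ ω ∂σ.toJordanDecomposition.posPart) - ∫ ω, φ ω ∂σ.toJordanDecomposition.negPart

/-- Membership in the set `𝕋 = {φ ∈ L∞(μ) : a ≤ ∫ φ f dμ ≤ b  ∀ f ∈ L1(μ), ‖f‖_{L1} ≤ 1}`. -/
def memT (μ : Measure Ω) (a b : ℝ) (φ : Ω → ℝ) : Prop :=
  Measurable φ ∧ (∃ c : ℝ, ∀ᵐ ω ∂μ, |φ ω| ≤ c) ∧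
    ∀ f : Ω → ℝ, Integrable f μ → (∫ ω, |f ω| ∂μ) ≤ 1 →
      a ≤ (∫ ω, φ ω * f ω ∂μ) ∧ (∫ ω, φ ω * f ω ∂μ) ≤ b

/-- The function `G(s,t) = log((1-s)/(1-t)) / log((t/s)·(1-s)/(1-t))`, with `G(s,s) = s`. -/
noncomputable def Gfun (s t : ℝ) : ℝ :=
  if s = t then s
  else Real.log ((1 - s) / (1 - t)) / Real.log (t / s * ((1 - s) / (1 - t)))

/-
Let `F P` be the mean of `ℓ*` under `P`. On a segment of `𝒫` joining measures with nearly extreme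
values of `θ`, `θ` is an increasing affine function of `F`; apply that function to the sample mean
and clip to `[M₋ + Δ, M₊ - Δ]`. The result exceeds `θ(P) + δ` only if the sample mean exceeds `F ν`
for the `ν` on the segment with `θ(ν) = θ(P) + δ`. Although `P` itself need not lie on the segment,
separation gives `F P < F ν`. On that event the density of `Q P^{⊗n}` relative to `Q ν^{⊗n}` is a
product of factors `1 + c (zᵢ - F ν)` with `c < 0`, hence at most `exp (c ∑ᵢ (zᵢ - F ν)) ≤ 1`. An
event on which the likelihood ratio is at most `1` has probability at most the testing affinity of
the two laws, here at most `η_A(δ)`. Underestimation is symmetric.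
-/

section Density

lemma withDensity_restrict_le {μ : Measure Ω} {f : Ω → ℝ≥0∞} {A : Set Ω} (hA : MeasurableSet A)
    (hf : ∀ ω ∈ A, f ω ≤ 1) : (μ.withDensity f).restrict A ≤ μ.restrict A :=
  calc (μ.withDensity f).restrict A = (μ.restrict A).withDensity f := restrict_withDensity hA f
    _ ≤ (μ.restrict A).withDensity 1 :=
        withDensity_mono ((ae_restrict_iff' hA).2 (.of_forall hf))
    _ = μ.restrict A := withDensity_one

variable {ι : Type*} [Fintype ι]

lemma lintegral_pi_prod {E : ι → Type*} [∀ i, MeasurableSpace (E i)] {μ : ∀ i, Measure (E i)}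
    [∀ i, IsProbabilityMeasure (μ i)] {f : ∀ i, E i → ℝ≥0∞} (hf : ∀ i, Measurable (f i)) :
    ∫⁻ z, ∏ i, f i (z i) ∂Measure.pi μ = ∏ i, ∫⁻ x, f i x ∂μ i := by
  have hindep : iIndepFun (fun i (z : ∀ i, E i) => f i (z i)) (Measure.pi μ) :=
    iIndepFun_pi fun i => (hf i).aemeasurable
  rw [lintegral_prod_eq_prod_lintegral_of_indepFun _ _ hindep
    fun i => (hf i).comp (measurable_pi_apply i)]
  exact Finset.prod_congr rfl fun i _ =>
    (measurePreserving_eval μ i).lintegral_comp (hf i)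

lemma pi_withDensity {E : ι → Type*} [∀ i, MeasurableSpace (E i)] {μ : ∀ i, Measure (E i)}
    [∀ i, IsProbabilityMeasure (μ i)] {f : ∀ i, E i → ℝ≥0∞} (hf : ∀ i, Measurable (f i))
    [∀ i, SigmaFinite ((μ i).withDensity (f i))] :
    Measure.pi (fun i => (μ i).withDensity (f i)) =
      (Measure.pi μ).withDensity fun z => ∏ i, f i (z i) := by
  refine Measure.pi_eq fun s hs => ?_
  have hind : (Set.univ.pi s).indicator (fun z : ∀ i, E i => ∏ i, f i (z i)) =
      fun z => ∏ i, (s i).indicator (f i) (z i) := by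
    classical
    ext z
    simp only [Set.indicator_apply, Set.mem_univ_pi, Finset.prod_ite_zero, Finset.mem_univ,
      true_imp_iff]
  rw [withDensity_apply _ (.univ_pi hs), ← lintegral_indicator (.univ_pi hs), hind,
    lintegral_pi_prod fun i => (hf i).indicator (hs i)]
  exact Finset.prod_congr rfl fun i _ => by
    rw [lintegral_indicator (hs i), withDensity_apply _ (hs i)]

end Density

section TwoPoint

/-- The probability measure on `{-r, r}` with mean `m`, for `|m| ≤ r`. -/
noncomputable def twoPoint (r m : ℝ) : Measure ℝ :=
  ENNReal.ofReal ((1 + m / r) / 2) • Measure.dirac r +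
    ENNReal.ofReal ((1 - m / r) / 2) • Measure.dirac (-r)

variable {r m m' : ℝ}

lemma abs_div_le_one_of_abs_le (hm : |m| ≤ r) : |m / r| ≤ 1 :=
  abs_div m r ▸ div_le_one_of_le₀ (hm.trans (le_abs_self r)) (abs_nonneg r)

instance : IsFiniteMeasure (twoPoint r m) := by
  have := Measure.smul_finite (Measure.dirac r) (ofReal_ne_top (r := (1 + m / r) / 2))
  have := Measure.smul_finite (Measure.dirac (-r)) (ofReal_ne_top (r := (1 - m / r) / 2))
  unfold twoPoint
  infer_instance

lemma isProbabilityMeasure_twoPoint (hm : |m| ≤ r) : IsProbabilityMeasure (twoPoint r m) := by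
  obtain ⟨hlo, hhi⟩ := abs_le.1 (abs_div_le_one_of_abs_le hm)
  constructor
  simp only [twoPoint, Measure.coe_add, Measure.coe_smul, Pi.add_apply, Pi.smul_apply,
    measure_univ, smul_eq_mul, mul_one]
  rw [← ofReal_add (by linarith) (by linarith), ← ofReal_one]
  ring_nf

lemma twoPoint_eq_withDensity (hm' : |m'| < r) :
    twoPoint r m = (twoPoint r m').withDensity
      fun z => ENNReal.ofReal (1 + (m - m') * (z - m') / (r ^ 2 - m' ^ 2)) := by
  obtain ⟨hlo, hhi⟩ := abs_lt.1 hm'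
  have hr : 0 < r := (abs_nonneg m').trans_lt hm'
  have hadd : r + m' ≠ 0 := (by linarith : 0 < r + m').ne'
  have hsub : r - m' ≠ 0 := (sub_pos.2 hhi).ne'
  have hvar : r ^ 2 - m' ^ 2 = (r + m') * (r - m') := by ring
  have hpos : (1 + m / r) / 2 =
      (1 + m' / r) / 2 * (1 + (m - m') * (r - m') / (r ^ 2 - m' ^ 2)) := by
    rw [hvar]
    field_simp [hr.ne', hadd, hsub]
    ring
  have hneg : (1 - m / r) / 2 =
      (1 - m' / r) / 2 * (1 + (m - m') * (-r - m') / (r ^ 2 - m' ^ 2)) := by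
    rw [hvar]
    field_simp [hr.ne', hadd, hsub]
    ring
  obtain ⟨hratio_lo, hratio_hi⟩ := abs_le.1 (abs_div_le_one_of_abs_le hm'.le)
  have hpos' : 0 ≤ (1 + m' / r) / 2 := by linarith
  have hneg' : 0 ≤ (1 - m' / r) / 2 := by linarith
  rw [twoPoint, twoPoint, withDensity_add_measure, withDensity_smul_measure,
    withDensity_smul_measure, dirac_withDensity, dirac_withDensity, smul_smul, smul_smul,
    ← ofReal_mul hpos', ← ofReal_mul hneg', ← hpos, ← hneg]

variable {ι : Type*} [Fintype ι]

lemma prod_ofReal_one_add_le_one {x : ι → ℝ} (hx : ∑ i, x i ≤ 0) :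
    ∏ i, ENNReal.ofReal (1 + x i) ≤ 1 :=
  calc ∏ i, ENNReal.ofReal (1 + x i) ≤ ∏ i, ENNReal.ofReal (Real.exp (x i)) :=
        Finset.prod_le_prod' fun i _ => ofReal_le_ofReal (by
          rw [add_comm]; exact Real.add_one_le_exp (x i))
    _ = ENNReal.ofReal (Real.exp (∑ i, x i)) := by
        rw [← ofReal_prod_of_nonneg fun i _ => (Real.exp_pos _).le, Real.exp_sum]
    _ ≤ 1 := ofReal_le_one.2 (Real.exp_le_one_iff.2 hx)

lemma pi_twoPoint_restrict_le (hm' : |m'| < r) {A : Set (ι → ℝ)} (hA : MeasurableSet A)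
    (hle : ∀ z ∈ A, (m - m') * ∑ i, (z i - m') ≤ 0) :
    (Measure.pi fun _ : ι => twoPoint r m).restrict A ≤
      (Measure.pi fun _ : ι => twoPoint r m').restrict A := by
  have := isProbabilityMeasure_twoPoint hm'.le
  obtain ⟨hlo, hhi⟩ := abs_lt.1 hm'
  have hvar : 0 ≤ r ^ 2 - m' ^ 2 := sub_nonneg.2 (sq_le_sq' hlo.le hhi.le)
  have hdens := twoPoint_eq_withDensity (m := m) hm'
  have : SigmaFinite ((twoPoint r m').withDensity
      fun z => ENNReal.ofReal (1 + (m - m') * (z - m') / (r ^ 2 - m' ^ 2))) := by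
    rw [← hdens]; infer_instance
  rw [hdens, pi_withDensity fun _ => by fun_prop]
  refine withDensity_restrict_le hA fun z hz => prod_ofReal_one_add_le_one ?_
  rw [← Finset.sum_div, ← Finset.mul_sum]
  exact div_nonpos_of_nonpos_of_nonneg (hle z hz) hvar

end TwoPoint

section Affinity

lemma isTest_zero : IsTest (0 : Ω → ℝ) :=
  ⟨measurable_zero, fun _ => ⟨le_rfl, zero_le_one⟩⟩

lemma IsTest.one_sub {φ : Ω → ℝ} (hφ : IsTest φ) : IsTest fun ω => 1 - φ ω :=
  ⟨measurable_const.sub hφ.1, fun ω => ⟨sub_nonneg.2 (hφ.2 ω).2, sub_le_self _ (hφ.2 ω).1⟩⟩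

lemma IsTest.integrable {φ : Ω → ℝ} (hφ : IsTest φ) (μ : Measure Ω) [IsFiniteMeasure μ] :
    Integrable φ μ :=
  .of_bound hφ.1.aestronglyMeasurable 1
    (.of_forall fun ω => by rw [Real.norm_of_nonneg (hφ.2 ω).1]; exact (hφ.2 ω).2)

variable {μ0 μ1 : Measure Ω}

lemma pairAffinity_le_of_isTest {φ : Ω → ℝ} (hφ : IsTest φ) :
    pairAffinity μ0 μ1 ≤ testRisk μ0 μ1 φ := by
  refine csInf_le ⟨0, ?_⟩ ⟨φ, hφ, rfl⟩
  rintro _ ⟨ψ, hψ, rfl⟩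
  exact add_nonneg (integral_nonneg fun ω => (hψ.2 ω).1)
    (integral_nonneg fun ω => (hψ.one_sub.2 ω).1)

lemma le_pairAffinity {a : ℝ} (h : ∀ φ, IsTest φ → a ≤ testRisk μ0 μ1 φ) :
    a ≤ pairAffinity μ0 μ1 := by
  refine le_csInf ⟨_, 0, isTest_zero, rfl⟩ ?_
  rintro _ ⟨φ, hφ, rfl⟩
  exact h φ hφ

lemma pairAffinity_le_one [IsProbabilityMeasure μ1] : pairAffinity μ0 μ1 ≤ 1 :=
  (pairAffinity_le_of_isTest isTest_zero).trans (by simp [testRisk])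

lemma testRisk_one_sub (φ : Ω → ℝ) :
    testRisk μ0 μ1 (fun ω => 1 - φ ω) = testRisk μ1 μ0 φ := by
  simp only [testRisk, _root_.sub_sub_cancel, add_comm]

lemma pairAffinity_comm : pairAffinity μ0 μ1 = pairAffinity μ1 μ0 := by
  have hle (ν0 ν1 : Measure Ω) : pairAffinity ν0 ν1 ≤ pairAffinity ν1 ν0 :=
    le_pairAffinity fun φ hφ => testRisk_one_sub φ ▸ pairAffinity_le_of_isTest hφ.one_sub
  exact le_antisymm (hle μ0 μ1) (hle μ1 μ0)

lemma measure_le_pairAffinity_of_restrict_le [IsFiniteMeasure μ0] [IsFiniteMeasure μ1]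
    {A : Set Ω} (h : μ0.restrict A ≤ μ1.restrict A) :
    μ0 A ≤ ENNReal.ofReal (pairAffinity μ0 μ1) := by
  rw [← ofReal_measureReal (s := A)]
  refine ofReal_le_ofReal (le_pairAffinity fun φ hφ => ?_)
  have hnonneg : 0 ≤ᵐ[μ1.restrict A] fun ω => 1 - φ ω := .of_forall fun ω => (hφ.one_sub.2 ω).1
  calc μ0.real A = ∫ _ in A, 1 ∂μ0 := by simp
    _ = (∫ ω in A, φ ω ∂μ0) + ∫ ω in A, (1 - φ ω) ∂μ0 := by
        rw [← integral_add (hφ.integrable _) (hφ.one_sub.integrable _)]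
        simp only [add_sub_cancel]
    _ ≤ (∫ ω in A, φ ω ∂μ0) + ∫ ω in A, (1 - φ ω) ∂μ1 :=
        add_le_add_right (integral_mono_measure h hnonneg (hφ.one_sub.integrable _)) _
    _ ≤ testRisk μ0 μ1 φ :=
        add_le_add
          (setIntegral_le_integral (hφ.integrable _) (.of_forall fun ω => (hφ.2 ω).1))
          (setIntegral_le_integral (hφ.one_sub.integrable _)
            (.of_forall fun ω => (hφ.one_sub.2 ω).1))

lemma subset_convComb (M : Set (Measure Ω)) : M ⊆ convComb M := fun μ hμ =>
  ⟨1, fun _ => 1, fun _ => μ, by simp, fun _ => hμ, by simp⟩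

lemma isProbabilityMeasure_of_mem_convComb {M : Set (Measure Ω)}
    (hM : ∀ μ ∈ M, IsProbabilityMeasure μ) {μ : Measure Ω} (hμ : μ ∈ convComb M) :
    IsProbabilityMeasure μ := by
  obtain ⟨k, w, ν, hw, hν, rfl⟩ := hμ
  refine ⟨?_⟩
  have hmass : ∀ i, (w i • ν i) Set.univ = w i := fun i => by
    have := hM _ (hν i)
    simp
  rw [Measure.finsetSum_apply, ← hw]
  exact Finset.sum_congr rfl fun i _ => hmass i

lemma pairAffinity_le_etaA {QPn : Measure X → Measure Ω} {P : Set (Measure X)}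
    {θ : Measure X → ℝ} (hQ : ∀ μ ∈ P, IsProbabilityMeasure (QPn μ)) {δ : ℝ}
    {μ ν : Measure X} (hμ : μ ∈ P) (hν : ν ∈ P) (hδ : θ μ + δ ≤ θ ν) :
    pairAffinity (QPn μ) (QPn ν) ≤ etaA QPn P θ δ := by
  let lower (t : ℝ) := convComb (QPn '' {μ | μ ∈ P ∧ θ μ ≤ t})
  let upper (t : ℝ) := convComb (QPn '' {μ | μ ∈ P ∧ t + δ ≤ θ μ})
  have hle_one (t : ℝ) :
      1 ∈ upperBounds {r | ∃ μ0 ∈ lower t, ∃ μ1 ∈ upper t, r = pairAffinity μ0 μ1} := by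
    rintro _ ⟨μ0, -, μ1, hμ1, rfl⟩
    have : IsProbabilityMeasure μ1 := by
      refine isProbabilityMeasure_of_mem_convComb ?_ hμ1
      rintro _ ⟨ρ, hρ, rfl⟩
      exact hQ ρ hρ.1
    exact pairAffinity_le_one
  calc pairAffinity (QPn μ) (QPn ν) ≤ setAffinity (lower (θ μ)) (upper (θ μ)) :=
        le_csSup ⟨1, hle_one (θ μ)⟩ ⟨_, subset_convComb _ ⟨μ, ⟨hμ, le_rfl⟩, rfl⟩,
          _, subset_convComb _ ⟨ν, ⟨hν, hδ⟩, rfl⟩, rfl⟩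
    _ ≤ etaA QPn P θ δ := by
        refine le_ciSup (f := fun t => setAffinity (lower t) (upper t)) ⟨1, ?_⟩ (θ μ)
        rintro _ ⟨t, rfl⟩
        exact Real.sSup_le (hle_one t) zero_le_one

end Affinity

section BinarySample

/-- The magnitude `z₀` of the outputs `±z₀` of the binary channel `Q₁^{(α,ℓ)}`. -/
noncomputable def binScale {S : Type*} (α : ℝ) (ℓ : S → ℝ) : ℝ :=
  supNorm ℓ * ((Real.exp α + 1) / (Real.exp α - 1))

/-- The law `Q P^{⊗n}` of the privatized sample, for the non-interactive channel `Q` whose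
marginals are all `Q₁^{(α,ℓ)}`; the `n` coordinates are then i.i.d. -/
noncomputable def binSampleLaw (α : ℝ) (ℓ : X → ℝ) (n : ℕ) (μ : Measure X) :
    Measure (Fin n → ℝ) :=
  Measure.pi fun _ => push (binChannel α ℓ) μ

variable {α : ℝ}

lemma one_lt_exp_ratio (hα : 0 < α) : 1 < (Real.exp α + 1) / (Real.exp α - 1) := by
  have : 1 < Real.exp α := Real.one_lt_exp_iff.2 hα
  rw [one_lt_div (by linarith)]
  linarith

section SupNorm

variable {S : Type*} {f : S → ℝ}

lemma abs_le_supNorm (hbdd : BddAbove (Set.range fun x => |f x|)) (x : S) : |f x| ≤ supNorm f :=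
  le_ciSup hbdd x

lemma supNorm_nonneg (f : S → ℝ) : 0 ≤ supNorm f :=
  Real.iSup_nonneg fun x => abs_nonneg (f x)

lemma supNorm_le_binScale (hα : 0 < α) : supNorm f ≤ binScale α f :=
  le_mul_of_one_le_right (supNorm_nonneg f) (one_lt_exp_ratio hα).le

lemma supNorm_lt_binScale (hα : 0 < α) (hpos : 0 < supNorm f) : supNorm f < binScale α f :=
  lt_mul_of_one_lt_right hpos (one_lt_exp_ratio hα)

lemma binChannel_eq_twoPoint : binChannel α f = fun x => twoPoint (binScale α f) (f x) := rfl

end SupNorm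

variable {ℓ : X → ℝ} {n : ℕ} {μ ν : Measure X}

lemma integrable_of_bddAbove_abs [IsFiniteMeasure μ] (hℓ : Measurable ℓ)
    (hbdd : BddAbove (Set.range fun x => |ℓ x|)) : Integrable ℓ μ :=
  .of_bound hℓ.aestronglyMeasurable (supNorm ℓ) (.of_forall (abs_le_supNorm hbdd))

lemma abs_integral_le_supNorm [IsProbabilityMeasure μ]
    (hbdd : BddAbove (Set.range fun x => |ℓ x|)) : |∫ x, ℓ x ∂μ| ≤ supNorm ℓ := by
  simpa only [Real.norm_eq_abs, probReal_univ, mul_one] using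
    norm_integral_le_of_norm_le_const (μ := μ) (f := ℓ) (.of_forall (abs_le_supNorm hbdd))

lemma lintegral_ofReal_half_one_add_div [IsProbabilityMeasure μ] {r : ℝ} (hint : Integrable ℓ μ)
    (hr : ∀ x, |ℓ x| ≤ r) :
    ∫⁻ x, ENNReal.ofReal ((1 + ℓ x / r) / 2) ∂μ =
      ENNReal.ofReal ((1 + (∫ x, ℓ x ∂μ) / r) / 2) := by
  have hnonneg (x : X) : 0 ≤ (1 + ℓ x / r) / 2 := by
    linarith [(abs_le.1 (abs_div_le_one_of_abs_le (hr x))).1]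
  have hint' : Integrable (fun x => (1 + ℓ x / r) / 2) μ :=
    ((integrable_const 1).add (hint.div_const r)).div_const 2
  rw [← ofReal_integral_eq_lintegral_ofReal hint' (.of_forall hnonneg), integral_div,
    integral_add (integrable_const 1) (hint.div_const r), integral_div]
  simp only [integral_const, probReal_univ, one_smul]

lemma bind_twoPoint [IsProbabilityMeasure μ] {r : ℝ} (hℓ : Measurable ℓ) (hr : ∀ x, |ℓ x| ≤ r) :
    μ.bind (fun x => twoPoint r (ℓ x)) = twoPoint r (∫ x, ℓ x ∂μ) := by
  have hint : Integrable ℓ μ := .of_bound hℓ.aestronglyMeasurable r (.of_forall hr)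
  have hplus := lintegral_ofReal_half_one_add_div hint hr
  have hminus := lintegral_ofReal_half_one_add_div hint.neg fun x =>
    (abs_neg (ℓ x)).trans_le (hr x)
  simp only [Pi.neg_apply, integral_neg, neg_div, ← sub_eq_add_neg] at hminus
  have hmeas : Measurable fun x => twoPoint r (ℓ x) := by
    refine Measure.measurable_of_measurable_coe _ fun s _ => ?_
    simp only [twoPoint, Measure.coe_add, Measure.coe_smul, Pi.add_apply, Pi.smul_apply,
      smul_eq_mul]
    fun_prop
  ext s hs
  rw [Measure.bind_apply hs hmeas.aemeasurable]
  simp only [twoPoint, Measure.coe_add, Measure.coe_smul, Pi.add_apply, Pi.smul_apply, smul_eq_mul]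
  rw [lintegral_add_left (by fun_prop), lintegral_mul_const _ (by fun_prop),
    lintegral_mul_const _ (by fun_prop), hplus, hminus]

lemma binSampleLaw_eq_pi_twoPoint [IsProbabilityMeasure μ] (hα : 0 < α) (hℓ : Measurable ℓ)
    (hbdd : BddAbove (Set.range fun x => |ℓ x|)) :
    binSampleLaw α ℓ n μ = Measure.pi fun _ => twoPoint (binScale α ℓ) (∫ x, ℓ x ∂μ) := by
  have hpush : push (binChannel α ℓ) μ = twoPoint (binScale α ℓ) (∫ x, ℓ x ∂μ) := by
    rw [push, binChannel_eq_twoPoint]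
    exact bind_twoPoint hℓ fun x => (abs_le_supNorm hbdd x).trans (supNorm_le_binScale hα)
  rw [binSampleLaw, hpush]

lemma isProbabilityMeasure_binSampleLaw [IsProbabilityMeasure μ] (hα : 0 < α)
    (hℓ : Measurable ℓ) (hbdd : BddAbove (Set.range fun x => |ℓ x|)) :
    IsProbabilityMeasure (binSampleLaw α ℓ n μ) := by
  rw [binSampleLaw_eq_pi_twoPoint hα hℓ hbdd]
  have : IsProbabilityMeasure (twoPoint (binScale α ℓ) (∫ x, ℓ x ∂μ)) :=
    isProbabilityMeasure_twoPoint
      ((abs_integral_le_supNorm hbdd).trans (supNorm_le_binScale hα))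
  infer_instance

lemma supNorm_pos_of_integral_ne [IsProbabilityMeasure μ] [IsProbabilityMeasure ν]
    (hbdd : BddAbove (Set.range fun x => |ℓ x|)) (hne : ∫ x, ℓ x ∂μ ≠ ∫ x, ℓ x ∂ν) :
    0 < supNorm ℓ := by
  refine (supNorm_nonneg ℓ).lt_of_ne fun hzero => hne ?_
  have hμ := abs_integral_le_supNorm (μ := μ) hbdd
  have hν := abs_integral_le_supNorm (μ := ν) hbdd
  rw [← hzero, abs_nonpos_iff] at hμ hν
  rw [hμ, hν]

lemma binSampleLaw_le_pairAffinity [IsProbabilityMeasure μ] [IsProbabilityMeasure ν]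
    (hα : 0 < α) (hℓ : Measurable ℓ) (hbdd : BddAbove (Set.range fun x => |ℓ x|))
    (hne : ∫ x, ℓ x ∂μ ≠ ∫ x, ℓ x ∂ν) {A : Set (Fin n → ℝ)} (hA : MeasurableSet A)
    (hle : ∀ z ∈ A, (∫ x, ℓ x ∂μ - ∫ x, ℓ x ∂ν) * ∑ i, (z i - ∫ x, ℓ x ∂ν) ≤ 0) :
    binSampleLaw α ℓ n μ A ≤
      ENNReal.ofReal (pairAffinity (binSampleLaw α ℓ n μ) (binSampleLaw α ℓ n ν)) := by
  have := isProbabilityMeasure_binSampleLaw (n := n) (μ := μ) hα hℓ hbdd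
  have := isProbabilityMeasure_binSampleLaw (n := n) (μ := ν) hα hℓ hbdd
  refine measure_le_pairAffinity_of_restrict_le ?_
  rw [binSampleLaw_eq_pi_twoPoint hα hℓ hbdd, binSampleLaw_eq_pi_twoPoint hα hℓ hbdd]
  have hlt : |∫ x, ℓ x ∂ν| < binScale α ℓ := (abs_integral_le_supNorm hbdd).trans_lt
    (supNorm_lt_binScale hα (supNorm_pos_of_integral_ne hbdd hne))
  exact pi_twoPoint_restrict_le hlt hA hle

end BinarySample

section Calibration

/-- The increasing affine map `x ↦ c * x + d` is a calibration of the statistic `F` for `θ` on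
`[lo, hi]` when each value in `[lo, hi]` is attained by `θ` at a member of `P` where the map sends
`F` to `θ`; other members of `P` with the same value of `θ` are not constrained. -/
def IsCalibration (P : Set (Measure X)) (θ F : Measure X → ℝ) (lo hi c d : ℝ) : Prop :=
  0 < c ∧ ∀ v ∈ Set.Icc lo hi, ∃ μ ∈ P, θ μ = v ∧ c * F μ + d = v

variable {P : Set (Measure X)} {θ F : Measure X → ℝ} {ℓ : X → ℝ}

lemma linearFunctional_integral (hint : ∀ μ ∈ P, Integrable ℓ μ) :
    LinearFunctional P fun μ => ∫ x, ℓ x ∂μ := by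
  intro P0 hP0 P1 hP1 lam hlam0 hlam1
  beta_reduce
  rw [mix, integral_add_measure ((hint P0 hP0).smul_measure ofReal_ne_top)
    ((hint P1 hP1).smul_measure ofReal_ne_top), integral_smul_measure, integral_smul_measure,
    toReal_ofReal hlam0, toReal_ofReal (sub_nonneg.2 hlam1), smul_eq_mul, smul_eq_mul]

lemma exists_isCalibration_Icc (hconv : ConvexMeasureSet P) (hθ : LinearFunctional P θ)
    (hF : LinearFunctional P F) {ν0 ν1 : Measure X} (hν0 : ν0 ∈ P) (hν1 : ν1 ∈ P)
    (hθlt : θ ν0 < θ ν1) (hFlt : F ν0 < F ν1) :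
    ∃ c d : ℝ, IsCalibration P θ F (θ ν0) (θ ν1) c d := by
  have hθgap : 0 < θ ν1 - θ ν0 := sub_pos.2 hθlt
  have hFgap : 0 < F ν1 - F ν0 := sub_pos.2 hFlt
  refine ⟨(θ ν1 - θ ν0) / (F ν1 - F ν0), θ ν0 - (θ ν1 - θ ν0) / (F ν1 - F ν0) * F ν0,
    div_pos hθgap hFgap, fun v hv => ?_⟩
  let lam := (v - θ ν0) / (θ ν1 - θ ν0)
  have hlam0 : 0 ≤ lam := div_nonneg (sub_nonneg.2 hv.1) hθgap.le
  have hlam1 : lam ≤ 1 := (div_le_one hθgap).2 (sub_le_sub_right hv.2 _)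
  refine ⟨mix lam ν1 ν0, hconv ν1 hν1 ν0 hν0 lam hlam0 hlam1, ?_, ?_⟩
  · rw [hθ ν1 hν1 ν0 hν0 lam hlam0 hlam1]
    simp only [lam]
    field_simp
    ring
  · rw [hF ν1 hν1 ν0 hν0 lam hlam0 hlam1]
    simp only [lam]
    field_simp
    ring

lemma exists_isCalibration (hconv : ConvexMeasureSet P) (hθ : LinearFunctional P θ)
    (hF : LinearFunctional P F) {Δ Mlo Mhi : ℝ} (hΔ : 0 < Δ) (hMlo : IsGLB (θ '' P) Mlo)
    (hMhi : IsLUB (θ '' P) Mhi)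
    (hsep : ∀ P0 ∈ P, ∀ P1 ∈ P, Δ ≤ θ P0 - θ P1 → F P1 < F P0) :
    ∃ c d : ℝ, IsCalibration P θ F (Mlo + Δ) (Mhi - Δ) c d := by
  rcases lt_or_ge (Mhi - Δ) (Mlo + Δ) with hempty | hwide
  · refine ⟨1, 0, one_pos, fun v hv => ?_⟩
    exact absurd (hv.1.trans hv.2) hempty.not_ge
  obtain ⟨_, ⟨ν0, hν0, rfl⟩, -, hν0lt⟩ :=
    hMlo.exists_between (lt_add_of_pos_right Mlo (half_pos hΔ))
  obtain ⟨_, ⟨ν1, hν1, rfl⟩, hν1lt, -⟩ :=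
    hMhi.exists_between (sub_lt_self Mhi (half_pos hΔ))
  obtain ⟨c, d, hc, hcal⟩ := exists_isCalibration_Icc hconv hθ hF hν0 hν1 (by linarith)
    (hsep ν1 hν1 ν0 hν0 (by linarith))
  exact ⟨c, d, hc, fun v hv => hcal v ⟨by linarith [hv.1], by linarith [hv.2]⟩⟩

end Calibration

section ClippedAffineMean

/-- The projection onto `[lo, hi]` of an affine function of the sample mean: the form of the
estimator. When `hi < lo` it is constantly `lo`. -/
noncomputable def clippedAffineMean {n : ℕ} (lo hi c d : ℝ) (z : Fin n → ℝ) : ℝ :=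
  max lo (min hi (c * ((∑ i, z i) / n) + d))

variable {n : ℕ} {lo hi c d v : ℝ} {z : Fin n → ℝ}

lemma measurable_clippedAffineMean :
    Measurable (clippedAffineMean lo hi c d : (Fin n → ℝ) → ℝ) := by
  unfold clippedAffineMean
  fun_prop

lemma abs_clippedAffineMean_sub_le (lo' hi' : ℝ) :
    |clippedAffineMean lo hi c d z - clippedAffineMean lo' hi' c d z| ≤
      max |lo - lo'| |hi - hi'| := by
  refine (abs_max_sub_max_le_max _ _ _ _).trans (max_le_max_left _ ?_)
  refine (abs_min_sub_min_le_max _ _ _ _).trans (max_le le_rfl ?_)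
  rw [sub_self, abs_zero]
  exact abs_nonneg _

lemma abs_clippedAffineMean_sub_le_of_mem_Icc {Δ : ℝ} (hv : v ∈ Set.Icc lo hi) :
    |clippedAffineMean (lo + Δ) (hi - Δ) c d z - v| ≤ max Δ (hi - lo - Δ) := by
  have hge : lo + Δ ≤ clippedAffineMean (lo + Δ) (hi - Δ) c d z := le_max_left _ _
  have hle : clippedAffineMean (lo + Δ) (hi - Δ) c d z ≤ max (lo + Δ) (hi - Δ) :=
    max_le_max_left _ (min_le_left _ _)
  have hshift : max (lo + Δ) (hi - Δ) = lo + max Δ (hi - lo - Δ) := by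
    rw [← max_add_add_left]
    ring_nf
  have hright : hi - lo - Δ ≤ max Δ (hi - lo - Δ) := le_max_right _ _
  rw [abs_le]
  constructor <;> linarith [hv.1, hv.2]

lemma lt_of_lt_clippedAffineMean (hlo : lo ≤ v) (hz : v < clippedAffineMean lo hi c d z) :
    v < hi ∧ v < c * ((∑ i, z i) / n) + d :=
  lt_min_iff.1 ((lt_max_iff.1 hz).resolve_left hlo.not_gt)

lemma lt_of_clippedAffineMean_lt (hhi : v ≤ hi) (hz : clippedAffineMean lo hi c d z < v) :
    lo < v ∧ c * ((∑ i, z i) / n) + d < v :=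
  have hlt := max_lt_iff.1 hz
  ⟨hlt.1, (min_lt_iff.1 hlt.2).resolve_left hhi.not_gt⟩

lemma sum_sub_eq_card_mul (hn : 0 < n) (a : ℝ) : ∑ i, (z i - a) = n * ((∑ i, z i) / n - a) := by
  rw [Finset.sum_sub_distrib, Finset.sum_const, Finset.card_univ, Fintype.card_fin, nsmul_eq_mul]
  field_simp

end ClippedAffineMean

section Tail

variable {α : ℝ} {n : ℕ} {P : Set (Measure X)} {θ : Measure X → ℝ} {ℓ : X → ℝ}
  {lo hi c d δ : ℝ} {μ : Measure X}

lemma binSampleLaw_le_etaA (hα : 0 < α) (hP : ∀ μ ∈ P, IsProbabilityMeasure μ)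
    (hℓ : Measurable ℓ) (hbdd : BddAbove (Set.range fun x => |ℓ x|)) {ν : Measure X}
    (hμ : μ ∈ P) (hν : ν ∈ P)
    (hδ : δ ≤ |θ μ - θ ν|) (hne : ∫ x, ℓ x ∂μ ≠ ∫ x, ℓ x ∂ν) {A : Set (Fin n → ℝ)}
    (hA : MeasurableSet A)
    (hle : ∀ z ∈ A, (∫ x, ℓ x ∂μ - ∫ x, ℓ x ∂ν) * ∑ i, (z i - ∫ x, ℓ x ∂ν) ≤ 0) :
    binSampleLaw α ℓ n μ A ≤ ENNReal.ofReal (etaA (binSampleLaw α ℓ n) P θ δ) := by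
  have := hP μ hμ
  have := hP ν hν
  have hQ (ρ) (hρ : ρ ∈ P) : IsProbabilityMeasure (binSampleLaw α ℓ n ρ) :=
    have := hP ρ hρ
    isProbabilityMeasure_binSampleLaw hα hℓ hbdd
  refine (binSampleLaw_le_pairAffinity hα hℓ hbdd hne hA hle).trans (ofReal_le_ofReal ?_)
  rcases le_abs.1 hδ with hgap | hgap
  · rw [pairAffinity_comm]
    exact pairAffinity_le_etaA hQ hν hμ (by linarith)
  · exact pairAffinity_le_etaA hQ hμ hν (by linarith)

lemma measure_lt_clippedAffineMean_le (hα : 0 < α) (hn : 0 < n)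
    (hP : ∀ μ ∈ P, IsProbabilityMeasure μ) (hℓ : Measurable ℓ)
    (hbdd : BddAbove (Set.range fun x => |ℓ x|))
    (hcal : IsCalibration P θ (fun μ => ∫ x, ℓ x ∂μ) lo hi c d)
    (hsep : ∀ P0 ∈ P, ∀ P1 ∈ P, δ ≤ θ P0 - θ P1 → ∫ x, ℓ x ∂P1 < ∫ x, ℓ x ∂P0)
    (hμ : μ ∈ P) (hlo : lo ≤ θ μ + δ) :
    binSampleLaw α ℓ n μ {z | θ μ + δ < clippedAffineMean lo hi c d z} ≤
      ENNReal.ofReal (etaA (binSampleLaw α ℓ n) P θ δ) := by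
  rcases Set.eq_empty_or_nonempty
    {z : Fin n → ℝ | θ μ + δ < clippedAffineMean lo hi c d z} with hempty | ⟨z, hz⟩
  · rw [hempty, measure_empty]
    exact zero_le
  have hhi : θ μ + δ ≤ hi := (lt_of_lt_clippedAffineMean hlo hz).1.le
  obtain ⟨ν, hν, hθν, hcν⟩ := hcal.2 (θ μ + δ) ⟨hlo, hhi⟩
  beta_reduce at hcν
  have hlt : ∫ x, ℓ x ∂μ < ∫ x, ℓ x ∂ν := hsep ν hν μ hμ (by linarith)
  refine binSampleLaw_le_etaA hα hP hℓ hbdd hμ hν (le_abs.2 (.inr (by linarith))) hlt.ne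
    (measurableSet_lt measurable_const measurable_clippedAffineMean) fun z hz => ?_
  have hmean : ∫ x, ℓ x ∂ν < (∑ i, z i) / n := lt_of_mul_lt_mul_left
    (by linarith [(lt_of_lt_clippedAffineMean hlo hz).2]) hcal.1.le
  rw [sum_sub_eq_card_mul hn]
  exact mul_nonpos_of_nonpos_of_nonneg (sub_nonpos.2 hlt.le)
    (mul_nonneg n.cast_nonneg (sub_nonneg.2 hmean.le))

lemma measure_clippedAffineMean_lt_le (hα : 0 < α) (hn : 0 < n)
    (hP : ∀ μ ∈ P, IsProbabilityMeasure μ) (hℓ : Measurable ℓ)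
    (hbdd : BddAbove (Set.range fun x => |ℓ x|))
    (hcal : IsCalibration P θ (fun μ => ∫ x, ℓ x ∂μ) lo hi c d)
    (hsep : ∀ P0 ∈ P, ∀ P1 ∈ P, δ ≤ θ P0 - θ P1 → ∫ x, ℓ x ∂P1 < ∫ x, ℓ x ∂P0)
    (hμ : μ ∈ P) (hhi : θ μ - δ ≤ hi) :
    binSampleLaw α ℓ n μ {z | clippedAffineMean lo hi c d z < θ μ - δ} ≤
      ENNReal.ofReal (etaA (binSampleLaw α ℓ n) P θ δ) := by
  rcases Set.eq_empty_or_nonempty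
    {z : Fin n → ℝ | clippedAffineMean lo hi c d z < θ μ - δ} with hempty | ⟨z, hz⟩
  · rw [hempty, measure_empty]
    exact zero_le
  have hlo : lo ≤ θ μ - δ := (lt_of_clippedAffineMean_lt hhi hz).1.le
  obtain ⟨ν, hν, hθν, hcν⟩ := hcal.2 (θ μ - δ) ⟨hlo, hhi⟩
  beta_reduce at hcν
  have hlt : ∫ x, ℓ x ∂ν < ∫ x, ℓ x ∂μ := hsep μ hμ ν hν (by linarith)
  refine binSampleLaw_le_etaA hα hP hℓ hbdd hμ hν (le_abs.2 (.inl (by linarith))) hlt.ne'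
    (measurableSet_lt measurable_clippedAffineMean measurable_const) fun z hz => ?_
  have hmean : (∑ i, z i) / n < ∫ x, ℓ x ∂ν := lt_of_mul_lt_mul_left
    (by linarith [(lt_of_clippedAffineMean_lt hhi hz).2]) hcal.1.le
  rw [sum_sub_eq_card_mul hn]
  exact mul_nonpos_of_nonneg_of_nonpos (sub_nonneg.2 hlt.le)
    (mul_nonpos_of_nonneg_of_nonpos n.cast_nonneg (sub_nonpos.2 hmean.le))

lemma measure_lt_abs_clippedAffineMean_sub_le (hα : 0 < α) (hn : 0 < n)
    (hP : ∀ μ ∈ P, IsProbabilityMeasure μ) (hℓ : Measurable ℓ)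
    (hbdd : BddAbove (Set.range fun x => |ℓ x|))
    (hcal : IsCalibration P θ (fun μ => ∫ x, ℓ x ∂μ) lo hi c d)
    (hsep : ∀ P0 ∈ P, ∀ P1 ∈ P, δ ≤ θ P0 - θ P1 → ∫ x, ℓ x ∂P1 < ∫ x, ℓ x ∂P0)
    (hμ : μ ∈ P) (hlo : lo ≤ θ μ + δ) (hhi : θ μ - δ ≤ hi) :
    binSampleLaw α ℓ n μ {z | δ < |clippedAffineMean lo hi c d z - θ μ|} ≤
      ENNReal.ofReal (2 * etaA (binSampleLaw α ℓ n) P θ δ) := by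
  have hsplit : {z : Fin n → ℝ | δ < |clippedAffineMean lo hi c d z - θ μ|} ⊆
      {z | θ μ + δ < clippedAffineMean lo hi c d z} ∪
        {z | clippedAffineMean lo hi c d z < θ μ - δ} := by
    intro z hz
    have hz : δ < |clippedAffineMean lo hi c d z - θ μ| := hz
    rcases lt_abs.1 hz with h | h
    · exact .inl (lt_sub_iff_add_lt'.1 h)
    · rw [neg_sub] at h
      exact .inr (lt_sub_comm.1 h)
  calc binSampleLaw α ℓ n μ {z | δ < |clippedAffineMean lo hi c d z - θ μ|}
      ≤ _ := (measure_mono hsplit).trans (measure_union_le _ _)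
    _ ≤ ENNReal.ofReal (etaA (binSampleLaw α ℓ n) P θ δ) +
          ENNReal.ofReal (etaA (binSampleLaw α ℓ n) P θ δ) :=
        add_le_add (measure_lt_clippedAffineMean_le hα hn hP hℓ hbdd hcal hsep hμ hlo)
          (measure_clippedAffineMean_lt_le hα hn hP hℓ hbdd hcal hsep hμ hhi)
    _ = ENNReal.ofReal (2 * etaA (binSampleLaw α ℓ n) P θ δ) := by
        rw [ofReal_mul zero_le_two, ofReal_ofNat, two_mul]

lemma measure_lt_abs_le_sum_of_tail_le {ρ : Measure Ω} {g : Ω → ℝ} {E : ℝ → ℝ} {Δ w : ℝ} {N : ℕ}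
    (hΔ : 0 < Δ) (hN : w < N * Δ) (hg : ∀ ω, |g ω| ≤ max Δ (w - Δ))
    (htail : ∀ δ, Δ ≤ δ → ρ {ω | δ < |g ω|} ≤ ENNReal.ofReal (2 * E δ)) (L : ℕ) :
    ρ {ω | ((L : ℝ) + 1) * Δ < |g ω|} ≤
      ENNReal.ofReal (4 * ∑ k ∈ Finset.Icc (L + 1) (N - 2), max (E (k * Δ)) 0) := by
  have hΔ_le : Δ ≤ ((L : ℝ) + 1) * Δ := le_mul_of_one_le_left hΔ.le (by simp)
  rcases le_or_gt (L + 1) (N - 2) with hL | hL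
  · refine (htail _ hΔ_le).trans (ofReal_le_ofReal ?_)
    have hnonneg (k : ℕ) : 0 ≤ max (E (k * Δ)) 0 := le_max_right _ _
    have hterm : max (E ((L + 1 : ℕ) * Δ)) 0 ≤
        ∑ k ∈ Finset.Icc (L + 1) (N - 2), max (E (k * Δ)) 0 :=
      Finset.single_le_sum (fun k _ => hnonneg k) (Finset.left_mem_Icc.2 hL)
    have hE : E ((L + 1 : ℕ) * Δ) ≤ max (E ((L + 1 : ℕ) * Δ)) 0 := le_max_left _ _
    have hterm_nonneg := hnonneg (L + 1)
    push_cast at hterm hE hterm_nonneg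
    linarith
  · have hNL : (N : ℝ) ≤ L + 2 := by exact_mod_cast (by omega : N ≤ L + 2)
    have hw : w - Δ ≤ ((L : ℝ) + 1) * Δ := by nlinarith
    have hempty : {ω | ((L : ℝ) + 1) * Δ < |g ω|} = ∅ :=
      Set.eq_empty_of_forall_notMem fun ω hω => ((hg ω).trans (max_le hΔ_le hw)).not_gt hω
    rw [hempty, measure_empty]
    exact zero_le

end Tail

theorem statement12_general {X : Type*} [MeasurableSpace X] {α : ℝ} (hα : 0 < α)
    {n : ℕ} (hn : 0 < n) {P : Set (Measure X)} (hP : ∀ μ ∈ P, IsProbabilityMeasure μ)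
    (hconv : ConvexMeasureSet P) {θ : Measure X → ℝ} (hlin : LinearFunctional P θ)
    {Δ : ℝ} (hΔ : 0 < Δ) {Mlo Mhi : ℝ} (hMlo : IsGLB (θ '' P) Mlo) (hMhi : IsLUB (θ '' P) Mhi)
    {ℓ : X → ℝ} (hℓ : Measurable ℓ) (hbdd : BddAbove (Set.range fun x => |ℓ x|))
    (hsep : ∀ P0 ∈ P, ∀ P1 ∈ P, Δ ≤ θ P0 - θ P1 → ∫ x, ℓ x ∂P1 < ∫ x, ℓ x ∂P0)
    {N : ℕ} (hN : Mhi - Mlo < N * Δ) :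
    ∃ est : (Fin n → ℝ) → ℝ, Measurable est ∧
      (∀ μ ∈ P, ∀ δ, Δ ≤ δ → binSampleLaw α ℓ n μ {z | δ < |est z - θ μ|} ≤
        ENNReal.ofReal (2 * etaA (binSampleLaw α ℓ n) P θ δ)) ∧
      (∀ L : ℕ, ∀ μ ∈ P, binSampleLaw α ℓ n μ {z | ((L : ℝ) + 1) * Δ < |est z - θ μ|} ≤
        ENNReal.ofReal (4 * ∑ k ∈ Finset.Icc (L + 1) (N - 2),
          max (etaA (binSampleLaw α ℓ n) P θ (k * Δ)) 0)) ∧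
      ∃ c d : ℝ, ∀ z : Fin n → ℝ,
        |max Mlo (min Mhi (c * ((∑ i, z i) / n) + d)) - est z| ≤ Δ := by
  have hF : LinearFunctional P fun μ => ∫ x, ℓ x ∂μ := linearFunctional_integral fun μ hμ =>
    have := hP μ hμ
    integrable_of_bddAbove_abs hℓ hbdd
  obtain ⟨c, d, hcal⟩ := exists_isCalibration hconv hlin hF hΔ hMlo hMhi hsep
  have hrange (μ) (hμ : μ ∈ P) : θ μ ∈ Set.Icc Mlo Mhi :=
    ⟨hMlo.1 ⟨μ, hμ, rfl⟩, hMhi.1 ⟨μ, hμ, rfl⟩⟩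
  have htail (μ) (hμ : μ ∈ P) (δ) (hδ : Δ ≤ δ) :=
    measure_lt_abs_clippedAffineMean_sub_le hα hn hP hℓ hbdd hcal
      (fun P0 hP0 P1 hP1 hgap => hsep P0 hP0 P1 hP1 (hδ.trans hgap)) hμ
      (by linarith [(hrange μ hμ).1]) (by linarith [(hrange μ hμ).2])
  refine ⟨clippedAffineMean (Mlo + Δ) (Mhi - Δ) c d, measurable_clippedAffineMean, htail,
    fun L μ hμ => measure_lt_abs_le_sum_of_tail_le hΔ hN
      (fun z => abs_clippedAffineMean_sub_le_of_mem_Icc (hrange μ hμ)) (htail μ hμ) L,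
    c, d, fun z => (abs_clippedAffineMean_sub_le _ _).trans ?_⟩
  rw [sub_add_cancel_left, _root_.sub_sub_cancel, abs_neg, abs_of_pos hΔ, max_self]

/-- Proposition: the binary search estimator is nearly affine, part (ii).
Suppose `𝒫` is convex, `θ` is linear with `-∞ < M₋ < M₊ < ∞`, and there is a bounded
measurable `ℓ* : X → ℝ` with `‖ℓ*‖_∞ ≤ 1` and
`inf {∫ ℓ* dP0 - ∫ ℓ* dP1 : θ(P0) - θ(P1) ≥ Δ, P0, P1 ∈ 𝒫} > 0`. Let `Q1 = Q1^{(α,ℓ*)}`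
be the binary channel and `Q` the corresponding non-interactive channel. Then there exist a
measurable estimator `θ̂` satisfying the binary-search tail bound and an affine function
`g(x) = c x + d` such that `|Π_{[M₋,M₊]}(g(z̄_n)) - θ̂(z)| ≤ 2Δ` for all `z`. -/
theorem statement12 {X : Type*} [MeasurableSpace X] (α : ℝ) (hα : 0 < α)
    (n : ℕ) (hn : 0 < n)
    (P : Set (Measure X)) (hP : ∀ μ ∈ P, IsProbabilityMeasure μ)
    (hconv : ConvexMeasureSet P) (θ : Measure X → ℝ) (hlin : LinearFunctional P θ)
    (Δ : ℝ) (hΔ : 0 < Δ)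
    (Mlo Mhi : ℝ) (hMlo : Mlo = sInf (θ '' P)) (hMhi : Mhi = sSup (θ '' P))
    (hne : P.Nonempty) (hbb : BddBelow (θ '' P)) (hba : BddAbove (θ '' P)) (hlt : Mlo < Mhi)
    (ℓs : X → ℝ) (hmeas : Measurable ℓs) (hbdd : ∀ x, |ℓs x| ≤ 1)
    (hsep : ∃ ε : ℝ, 0 < ε ∧ ∀ P0 ∈ P, ∀ P1 ∈ P, Δ ≤ θ P0 - θ P1 →
      ε ≤ (∫ x, ℓs x ∂P0) - ∫ x, ℓs x ∂P1)
    (N : ℕ) (hN1 : Mhi - Mlo < N * Δ) (hN2 : ∀ m : ℕ, Mhi - Mlo < m * Δ → N ≤ m) :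
    ∃ est : (Fin n → ℝ) → ℝ, Measurable est ∧
      (∀ L : ℕ, ∀ μ ∈ P,
        (Measure.pi fun _ : Fin n => push (binChannel α ℓs) μ)
            {z | ((L : ℝ) + 1) * Δ < |est z - θ μ|}
          ≤ ENNReal.ofReal (4 * ∑ k ∈ Finset.Icc (L + 1) (N - 2),
              max (etaA
                (fun μ' : Measure X => Measure.pi fun _ : Fin n => push (binChannel α ℓs) μ')
                P θ ((k : ℝ) * Δ)) 0)) ∧
      ∃ c d : ℝ, ∀ z : Fin n → ℝ,
        |max Mlo (min Mhi (c * ((∑ i, z i) / n) + d)) - est z| ≤ 2 * Δ := by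
  obtain ⟨ε, hε, hsep⟩ := hsep
  obtain ⟨est, hest, -, htail, c, d, hcd⟩ := statement12_general hα hn hP hconv hlin hΔ
    (hMlo ▸ isGLB_csInf (hne.image θ) hbb) (hMhi ▸ isLUB_csSup (hne.image θ) hba) hmeas
    ⟨1, Set.forall_mem_range.2 hbdd⟩
    (fun P0 h0 P1 h1 hgap => sub_pos.1 (hε.trans_le (hsep P0 h0 P1 h1 hgap))) hN1
  exact ⟨est, hest, htail, c, d, fun z => (hcd z).trans (by linarith)⟩

end PrivacyPaper
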